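/- If A is an n-multilinear local differential operator with χ(A) = 0, then χ(A ∘ d/dx^i_j) = 0 for all 1 ≤ i ≤ N and 1 ≤ j ≤ n, where A ∘ d/dx^i_j denotes precomposition of A with the total derivative d/dx^i applied to the j-th argument. (Equivalently, the sequence {A ∈ LDO(n) : χ(A)=0} → LDO(n) → LDO(n)^{⊕Nn}, with maps the inclusion a_1 and a_0(A)_{i,j} := χ(A ∘ d/dx^i_j), is a chain complex.) -/

import Mathlib

/-!
Write `T_s` for the elementary operator with index `s = (I, α)`: it applies `(d/dx)^{I_1}` to the
product `opP s f = (∂/∂u)^{α_1} f_1 · Π_{k≥2} (d/dx)^{I_k} (∂/∂u)^{α_k} f_k`. If `A = Σ_s q_s T_s`,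
the characteristic is `χ(A)(f) = Σ_s (-1)^{|I_1|} (d/dx)^{I_1} q_s · opP s f`.

On local functions `[∂/∂u_J, d/dx^i]` is `∂/∂u_K` when `J = iK` and zero otherwise, so
`[(∂/∂u)^α, d/dx^i]` is a constant-coefficient combination of operators `(∂/∂u)^β` whose degree
is at least that of `α` minus one (`UPow_Dtot`). Hence precomposing `opP s` with `d/dx^i` in slot
`j ≥ 2` is a combination of products `opP t` with the same `I_1`. In the first slot the Leibniz
rule, i.e. `d/dx_1 = d/dy_1 - Σ_{k≥2} d/dy_k`, adds the term `d/dx^i (opP s f)` (`opP_precomp`).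
That term raises `I_1`, and raising `I_1` changes the characteristic by the total derivative `d/dx^i`
and a sign. Summing over `s` (`exists_coeff`) yields, for the presentation of `A ∘ d/dx^i_j` so
obtained,

  `χ(A ∘ d/dx^i_j) = χ(A) ∘ d/dx^i_j - [j = 1] d/dx^i ∘ χ(A)`,

which vanishes with `χ(A)`. The degree bound makes every coefficient of the new presentation a finite
sum. Given local arguments, all sums may be taken over finite sets, because vertical derivatives of
high degree vanish on them (`IsLocal.exists_UPow_eq_zero`). The total derivatives are handled by
reducing to directional derivatives of smooth functions of finitely many variables.
-/

open scoped BigOperators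

namespace JetBundle

/-- Multi-indices `J = (j_1,…,j_N)`. -/
abbrev MI (N : ℕ) := Fin N → ℕ

/-- A point of the infinite jet bundle `J^∞E`, with coordinates `(x^i, u_J)`. -/
abbrev JetPt (N : ℕ) := (Fin N → ℝ) × (MI N → ℝ)

/-- Real-valued functions on the infinite jet bundle. -/
abbrev Fn (N : ℕ) := JetPt N → ℝ

/-- Partial derivative with respect to the base coordinate `x^i`. -/
noncomputable def pderivX {N : ℕ} (i : Fin N) (f : Fn N) : Fn N :=
  fun p => deriv (fun t => f (Function.update p.1 i t, p.2)) (p.1 i)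

/-- Partial derivative with respect to the jet coordinate `u_J`. -/
noncomputable def pderivU {N : ℕ} (J : MI N) (f : Fn N) : Fn N :=
  fun p => deriv (fun t => f (p.1, Function.update p.2 J t)) (p.2 J)

/-- `iJ` : the multi-index `J` with its `i`-th entry increased by `1`. -/
def inc {N : ℕ} (i : Fin N) (J : MI N) : MI N := Function.update J i (J i + 1)

/-- The total derivative `d/dx^i = ∂/∂x^i + Σ_J u_{iJ} ∂/∂u_J`. -/
noncomputable def Dtot {N : ℕ} (i : Fin N) (f : Fn N) : Fn N :=
  fun p => pderivX i f p + ∑' J : MI N, p.2 (inc i J) * pderivU J f p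

/-- Iterated total derivative `(d/dx)^I`. -/
noncomputable def DPow {N : ℕ} (I : MI N) : Fn N → Fn N :=
  (List.finRange N).foldr (fun i g => (Dtot i)^[I i] ∘ g) id

/-- Iterated vertical derivative `(∂/∂u)^α` for a finitely supported exponent `α`. -/
noncomputable def UPow {N : ℕ} (α : MI N →₀ ℕ) : Fn N → Fn N :=
  α.support.toList.foldr (fun J g => (pderivU J)^[α J] ∘ g) id

/-- A local function: a smooth function of the base coordinates and
finitely many jet coordinates `u_J`. -/
def IsLocal {N : ℕ} (f : Fn N) : Prop :=
  ∃ (S : Finset (MI N)) (g : ((Fin N → ℝ) × (↥S → ℝ)) → ℝ),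
    ContDiff ℝ (⊤ : ℕ∞) g ∧ ∀ p : JetPt N, f p = g (p.1, fun J => p.2 J.1)

/-- The formal differential degree of an exponent `α`: the maximal `|J|` with `α J ≠ 0`. -/
def degf {N : ℕ} (α : MI N →₀ ℕ) : ℕ := α.support.sup fun J => ∑ i, J i

/-- Index type for the coefficients of an `n`-multilinear local differential operator:
a tuple of multi-indices `(I_1,…,I_n)` and vertical exponents `(α_1,…,α_n)`. -/
abbrev Idx (N n : ℕ) := (Fin n → MI N) × (Fin n → (MI N →₀ ℕ))

/-- Coefficient data of an `n`-multilinear local differential operator. -/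
abbrev OpData (N n : ℕ) := Idx N n → Fn N

/-- `n`-multilinear operators on functions on the jet bundle. -/
abbrev Op (N n : ℕ) := (Fin n → Fn N) → Fn N

/-- An `n`-tuple of local functions. -/
def LocalTuple {N n : ℕ} (f : Fin n → Fn N) : Prop := ∀ j, IsLocal (f j)

/-- Coefficient data is admissible if all coefficients are local functions and, for each `m`,
only finitely many coefficients with `Σ_j deg_f(α_j) ≤ m` are nonzero. -/
def Good {N n : ℕ} (q : OpData N n) : Prop :=
  (∀ Iα, IsLocal (q Iα)) ∧
    ∀ m : ℕ, {Iα : Idx N n | q Iα ≠ 0 ∧ ∑ j, degf (Iα.2 j) ≤ m}.Finite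

/-- The (unpolarized) realization of coefficient data:
`A(f_1,…,f_n) = Σ p_{I,α} Π_j (d/dx)^{I_j} (∂/∂u)^{α_j} f_j`. -/
noncomputable def realizeU {N n : ℕ} (q : OpData N n) (f : Fin n → Fn N) : Fn N :=
  fun pt => ∑' Iα : Idx N n, q Iα pt * ∏ j, DPow (Iα.1 j) (UPow (Iα.2 j) (f j)) pt

/-- The polarized realization of coefficient data: the slot `I_1` records powers of
`d/dy_1 = Σ_j d/dx_j`, i.e. total derivatives applied to the whole product, while for `j ≥ 2`
the slot `I_j` records powers of `d/dy_j = d/dx_j` acting on the `j`-th argument: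
`A(f_1,…,f_n) = Σ q_{I;α} (d/dx)^{I_1} [ (∂/∂u)^{α_1}f_1 · Π_{j≥2} (d/dx)^{I_j}(∂/∂u)^{α_j} f_j ]`. -/
noncomputable def realizeP {N n : ℕ} [NeZero n] (q : OpData N n) (f : Fin n → Fn N) : Fn N :=
  fun pt => ∑' Iα : Idx N n, q Iα pt *
    DPow (Iα.1 0) (fun p => ∏ j,
      if j = (0 : Fin n) then UPow (Iα.2 j) (f j) p
      else DPow (Iα.1 j) (UPow (Iα.2 j) (f j)) p) pt

/-- The characteristic, on polarized coefficient data: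
`χ(q)_{(0,I_2,…,I_n);α} := Σ_{I_1} (−1)^{|I_1|} (d/dx)^{I_1} q_{I_1,I_2,…,I_n;α}`. -/
noncomputable def chiData {N n : ℕ} [NeZero n] (q : OpData N n) : OpData N n :=
  fun Iα =>
    if Iα.1 0 = 0 then
      fun pt => ∑' K : MI N,
        (-1 : ℝ) ^ (∑ i, K i) * DPow K (q (Function.update Iα.1 0 K, Iα.2)) pt
    else 0

/-- `q` is a polarized presentation of the operator `A` (on local functions). -/
def Presents {N n : ℕ} [NeZero n] (q : OpData N n) (A : Op N n) : Prop :=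
  ∀ f, LocalTuple f → ∀ pt, A f pt = realizeP q f pt

/-- `A` is an `n`-multilinear local differential operator (unpolarized form). -/
def IsLDO {N n : ℕ} (A : Op N n) : Prop :=
  ∃ q : OpData N n, Good q ∧ ∀ f, LocalTuple f → ∀ pt, A f pt = realizeU q f pt

/-- `A` is an `n`-multilinear local differential operator, given by a polarized presentation. -/
def IsPLDO {N n : ℕ} [NeZero n] (A : Op N n) : Prop :=
  ∃ q : OpData N n, Good q ∧ Presents q A

/-- `A` is an `n`-multilinear local differential operator with vanishing characteristic. -/
def ChiZero {N n : ℕ} [NeZero n] (A : Op N n) : Prop :=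
  ∃ q : OpData N n, Good q ∧ Presents q A ∧
    ∀ f, LocalTuple f → ∀ pt, realizeP (chiData q) f pt = 0

/-- Precomposition `A ∘ d/dx^i_j` with the total derivative acting on the `j`-th argument. -/
noncomputable def precompD {N n : ℕ} (A : Op N n) (i : Fin N) (j : Fin n) : Op N n :=
  fun f => A (Function.update f j (Dtot i (f j)))

/-- A horizontal form, recorded by its coefficients on the basis
`(dx)^ε = (dx^1)^{ε^1} ∧ ⋯ ∧ (dx^N)^{ε^N}`, `ε : Fin N → Bool`. -/
abbrev Form (N : ℕ) := (Fin N → Bool) → Fn N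

/-- The form-degree `|ε|`. -/
def wt {N : ℕ} (ε : Fin N → Bool) : ℕ := ∑ i, if ε i then 1 else 0

/-- The sign exponent: the number of entries of `ε` below `i` which are set. -/
def pos {N : ℕ} (i : Fin N) (ε : Fin N → Bool) : ℕ := ∑ l, if l < i ∧ ε l then 1 else 0

/-- The horizontal differential `d_H ω = Σ_i dx^i ∧ (d/dx^i) ω`. -/
noncomputable def dH {N : ℕ} (ω : Form N) : Form N :=
  fun δ pt => ∑ i : Fin N,
    if δ i then (-1 : ℝ) ^ pos i δ * Dtot i (ω (Function.update δ i false)) pt else 0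

/-- A matrix of operators acting on horizontal forms (linear case). -/
abbrev FormOp (N : ℕ) := (Fin N → Bool) → (Fin N → Bool) → (Fn N → Fn N)

/-- Application of a matrix of operators to a form. -/
noncomputable def applyFO {N : ℕ} (M : FormOp N) (ω : Form N) : Form N :=
  fun δ pt => ∑ ε : Fin N → Bool, M ε δ (ω ε) pt

/-- A degree element of `DEnd(n)`: a matrix indexed by basis multidegrees of the inputs
`(ε_1,…,ε_n)` and of the output `δ`, with `n`-multilinear operator entries. -/
abbrev DMat (N n : ℕ) := (Fin n → (Fin N → Bool)) → (Fin N → Bool) → Op N n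

/-- All matrix entries are local differential operators. -/
def LDOMat {N n : ℕ} [NeZero n] (F : DMat N n) : Prop := ∀ εs δ, IsPLDO (F εs δ)

/-- `F` represents a degree-`k` map of the regraded horizontal complexes
(`Ω_i := Ω^{N−i,0}`): the entry at `(ε⃗, δ)` vanishes unless
`N − wt δ = k + Σ_j (N − wt ε_j)`. -/
def GradedMat {N n : ℕ} (k : ℤ) (F : DMat N n) : Prop :=
  ∀ εs δ, F εs δ ≠ 0 → (wt δ : ℤ) = (N : ℤ) - k - ∑ j, ((N : ℤ) - (wt (εs j) : ℤ))

/-- The differential `(δf)_s = d_H f_s − (−1)^k f_{s−1} d_H^{⊗n}` of the complex `DEnd_*(n)`,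
written out on matrix entries. -/
noncomputable def deltaMat {N n : ℕ} (k : ℤ) (F : DMat N n) : DMat N n :=
  fun εs δ g =>
    (fun pt => ∑ i : Fin N,
      if δ i then (-1 : ℝ) ^ pos i δ * Dtot i (F εs (Function.update δ i false) g) pt else 0)
    -
    ((-1 : ℝ) ^ k) • (fun pt => ∑ j : Fin n, ∑ i : Fin N,
      if εs j i = false then
        (-1 : ℝ) ^ ((∑ l ∈ Finset.univ.filter fun l => l < j, wt (εs l)) + pos i (εs j)) *
          F (Function.update εs j (Function.update (εs j) i true)) δ
            (Function.update g j (Dtot i (g j))) pt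
      else 0)

/-- A matrix of operators vanishes (on local arguments). -/
def MatZeroLoc {N n : ℕ} (F : DMat N n) : Prop :=
  ∀ εs δ g, LocalTuple g → ∀ pt, F εs δ g pt = 0

/-- Two matrices of operators agree (on local arguments). -/
def MatEqLoc {N n : ℕ} (F G : DMat N n) : Prop :=
  ∀ εs δ g, LocalTuple g → ∀ pt, F εs δ g pt = G εs δ g pt

/-- The projection `B_0 : DEnd_0(n) → LDO(n)`, i.e. the component `f_0` on the identifications
`[(Ω_*)^{⊗n}]_0 ≅ Loc(E)^{⊗n}`, `Ω_0 ≅ Loc(E)`. -/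
def B0 {N n : ℕ} (F : DMat N n) : Op N n := F (fun _ _ => true) fun _ => true

/-- A form with coefficients in `LDO(n)`: an element of the operator complex `O^*(n)`. -/
abbrev OForm (N n : ℕ) := (Fin N → Bool) → Op N n

/-- The differential of the operator complex: `d(A (dx)^ε) = Σ_i (d/dx^i ∘ A) dx^i ∧ (dx)^ε`. -/
noncomputable def dO {N n : ℕ} (ω : OForm N n) : OForm N n :=
  fun δ g pt => ∑ i : Fin N,
    if δ i then (-1 : ℝ) ^ pos i δ * Dtot i (ω (Function.update δ i false) g) pt else 0

/-- An element of `O^*(n)` concentrated in degree `k`. -/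
def OGraded {N n : ℕ} (k : ℕ) (ω : OForm N n) : Prop := ∀ δ, ω δ ≠ 0 → wt δ = k

/-- All coefficients are local differential operators. -/
def OLDO {N n : ℕ} [NeZero n] (ω : OForm N n) : Prop := ∀ δ, IsPLDO (ω δ)

/-- An element of `O^*(n)` vanishes on local arguments. -/
def OZeroLoc {N n : ℕ} (ω : OForm N n) : Prop :=
  ∀ δ g, LocalTuple g → ∀ pt, ω δ g pt = 0

/-- Two elements of `O^*(n)` agree on local arguments. -/
def OEqLoc {N n : ℕ} (ω η : OForm N n) : Prop :=
  ∀ δ g, LocalTuple g → ∀ pt, ω δ g pt = η δ g pt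

/-- The Euler operator `E(L dx^1∧⋯∧dx^N) = Σ_I (−1)^{|I|} (d/dx)^I (∂L/∂u_I)`. -/
noncomputable def Euler {N : ℕ} (L : Fn N) : Fn N :=
  fun pt => ∑' I : MI N, (-1 : ℝ) ^ (∑ i, I i) * DPow I (pderivU I L) pt

end JetBundle
namespace JetBundle

/-! ### Local functions and directional derivatives -/

/-- The restriction of a jet to the base coordinates and the jet coordinates `u_J`, `J ∈ S`. -/
def restr {N : ℕ} (S : Finset (MI N)) : JetPt N →ₗ[ℝ] (Fin N → ℝ) × (S → ℝ) where
  toFun p := (p.1, fun J => p.2 J.1)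
  map_add' _ _ := rfl
  map_smul' _ _ := rfl

/-- The derivative of `f` in the constant direction `v` of the jet space. -/
noncomputable def dird {N : ℕ} (v : JetPt N) (f : Fn N) : Fn N :=
  fun p => deriv (fun t : ℝ => f (p + t • v)) 0

/-- The coordinate direction of `x^i`. -/
def ex {N : ℕ} (i : Fin N) : JetPt N := (Pi.single i 1, 0)

/-- The coordinate direction of `u_J`. -/
def eu {N : ℕ} (J : MI N) : JetPt N := (0, Pi.single J 1)

/-- The coordinate function `u_J`. -/
def uc {N : ℕ} (J : MI N) : Fn N := fun p => p.2 J

lemma update_add_eq {ι : Type*} [DecidableEq ι] (x : ι → ℝ) (i : ι) (t : ℝ) :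
    Function.update x i (x i + t) = x + t • Pi.single i (1 : ℝ) := by
  ext k
  by_cases hk : k = i
  · subst hk; simp
  · simp [hk]

lemma pderivX_eq {N : ℕ} (i : Fin N) (f : Fn N) : pderivX i f = dird (ex i) f := by
  funext p
  have := deriv_comp_const_add (fun t => f (Function.update p.1 i t, p.2)) (p.1 i) 0
  simp only [add_zero] at this
  rw [pderivX, ← this, dird]
  congr 1
  funext t
  rw [update_add_eq]
  congr 1
  ext <;> simp [ex]

lemma pderivU_eq {N : ℕ} (J : MI N) (f : Fn N) : pderivU J f = dird (eu J) f := by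
  funext p
  have := deriv_comp_const_add (fun t => f (p.1, Function.update p.2 J t)) (p.2 J) 0
  simp only [add_zero] at this
  rw [pderivU, ← this, dird]
  congr 1
  funext t
  rw [update_add_eq]
  congr 1
  ext <;> simp [eu]

/-- `f` is the pullback of the smooth function `g` on the finitely many coordinates in `S`. -/
def LocVia {N : ℕ} (f : Fn N) (S : Finset (MI N)) (g : ((Fin N → ℝ) × (S → ℝ)) → ℝ) : Prop :=
  ContDiff ℝ (⊤ : ℕ∞) g ∧ ∀ p, f p = g (restr S p)

lemma isLocal_iff {N : ℕ} {f : Fn N} : IsLocal f ↔ ∃ S g, LocVia f S g := Iff.rfl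

lemma LocVia.mono {N : ℕ} {f : Fn N} {S T : Finset (MI N)} {g} (h : LocVia f S g) (hST : S ⊆ T) :
    ∃ g', LocVia f T g' := by
  refine ⟨fun y => g (y.1, fun J => y.2 ⟨J.1, hST J.2⟩), ?_, fun p => h.2 p⟩
  exact h.1.comp (by fun_prop)

lemma LocVia.hasDerivAt {N : ℕ} {f : Fn N} {S : Finset (MI N)} {g} (h : LocVia f S g)
    (v p : JetPt N) :
    HasDerivAt (fun t : ℝ => f (p + t • v)) (fderiv ℝ g (restr S p) (restr S v)) 0 := by
  have h1 : HasDerivAt (fun t : ℝ => restr S p + t • restr S v) (restr S v) 0 := by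
    simpa using ((hasDerivAt_id (0 : ℝ)).smul_const (restr S v)).const_add (restr S p)
  have h2 : HasFDerivAt g (fderiv ℝ g (restr S p)) (restr S p + (0 : ℝ) • restr S v) := by
    simpa using (h.1.differentiable (by simp) (restr S p)).hasFDerivAt
  have := h2.comp_hasDerivAt (0 : ℝ) h1
  refine this.congr_of_eventuallyEq (Filter.Eventually.of_forall fun t => ?_)
  simp [h.2, map_add, map_smul]

protected lemma LocVia.dird {N : ℕ} {f : Fn N} {S : Finset (MI N)} {g} (h : LocVia f S g) (v : JetPt N) :
    LocVia (dird v f) S (fun y => fderiv ℝ g y (restr S v)) :=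
  ⟨(h.1.fderiv_right (m := (⊤ : ℕ∞)) (by simp)).clm_apply contDiff_const,
    fun p => (h.hasDerivAt v p).deriv⟩

protected lemma IsLocal.dird {N : ℕ} {f : Fn N} (h : IsLocal f) (v : JetPt N) : IsLocal (dird v f) := by
  obtain ⟨S, g, hg⟩ := h
  exact ⟨S, _, LocVia.dird hg v⟩

protected lemma IsLocal.hasDerivAt {N : ℕ} {f : Fn N} (h : IsLocal f) (v p : JetPt N) :
    HasDerivAt (fun t : ℝ => f (p + t • v)) (dird v f p) 0 := by
  obtain ⟨S, g, hg⟩ := h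
  exact (LocVia.hasDerivAt hg v p).differentiableAt.hasDerivAt

lemma IsLocal.pair {N : ℕ} {f h : Fn N} (hf : IsLocal f) (hh : IsLocal h) :
    ∃ S g g', LocVia f S g ∧ LocVia h S g' := by
  classical
  obtain ⟨S, g, hg⟩ := isLocal_iff.1 hf
  obtain ⟨T, k, hk⟩ := isLocal_iff.1 hh
  obtain ⟨g', hg'⟩ := hg.mono (Finset.subset_union_left (s₂ := T))
  obtain ⟨k', hk'⟩ := hk.mono (Finset.subset_union_right (s₁ := S))
  exact ⟨_, _, _, hg', hk'⟩

lemma IsLocal.add {N : ℕ} {f h : Fn N} (hf : IsLocal f) (hh : IsLocal h) : IsLocal (f + h) := by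
  obtain ⟨S, g, g', h1, h2⟩ := hf.pair hh
  exact ⟨S, _, h1.1.add h2.1, fun p => by rw [Pi.add_apply, h1.2, h2.2]; rfl⟩

lemma IsLocal.mul {N : ℕ} {f h : Fn N} (hf : IsLocal f) (hh : IsLocal h) : IsLocal (f * h) := by
  obtain ⟨S, g, g', h1, h2⟩ := hf.pair hh
  exact ⟨S, _, h1.1.mul h2.1, fun p => by rw [Pi.mul_apply, h1.2, h2.2]; rfl⟩

lemma isLocal_const {N : ℕ} (c : ℝ) : IsLocal (fun _ : JetPt N => c) :=
  ⟨∅, fun _ => c, contDiff_const, fun _ => rfl⟩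

lemma isLocal_zero {N : ℕ} : IsLocal (0 : Fn N) := isLocal_const 0

lemma isLocal_one {N : ℕ} : IsLocal (1 : Fn N) := isLocal_const 1

lemma IsLocal.smul {N : ℕ} {f : Fn N} (hf : IsLocal f) (c : ℝ) : IsLocal (c • f) :=
  (isLocal_const c).mul hf

lemma isLocal_uc {N : ℕ} (J : MI N) : IsLocal (uc J) :=
  ⟨{J}, fun y => y.2 ⟨J, by simp⟩, by fun_prop, fun _ => rfl⟩

lemma IsLocal.sum {N : ℕ} {ι : Type*} {s : Finset ι} {f : ι → Fn N}
    (h : ∀ a ∈ s, IsLocal (f a)) : IsLocal (∑ a ∈ s, f a) :=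
  Finset.sum_induction _ IsLocal (fun _ _ => IsLocal.add) isLocal_zero h

lemma IsLocal.prod {N : ℕ} {ι : Type*} {s : Finset ι} {f : ι → Fn N}
    (h : ∀ a ∈ s, IsLocal (f a)) : IsLocal (∏ a ∈ s, f a) :=
  Finset.prod_induction _ IsLocal (fun _ _ => IsLocal.mul) isLocal_one h

lemma dird_mul {N : ℕ} {f h : Fn N} (v : JetPt N) (hf : IsLocal f) (hh : IsLocal h) :
    dird v (f * h) = dird v f * h + f * dird v h := by
  funext p
  have := ((hf.hasDerivAt v p).mul (hh.hasDerivAt v p)).deriv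
  simp only [zero_smul, add_zero] at this
  exact this

lemma dird_comm {N : ℕ} {f : Fn N} (v w : JetPt N) (hf : IsLocal f) :
    dird v (dird w f) = dird w (dird v f) := by
  obtain ⟨S, g, hg⟩ := isLocal_iff.1 hf
  funext p
  rw [((hg.dird w).dird v).2, ((hg.dird v).dird w).2]
  have hd : DifferentiableAt ℝ (fderiv ℝ g) (restr S p) :=
    (hg.1.fderiv_right (m := (⊤ : ℕ∞)) (by simp)).differentiable (by simp) _
  have hs : IsSymmSndFDerivAt ℝ g (restr S p) :=
    hg.1.contDiffAt.isSymmSndFDerivAt (by simp; exact WithTop.coe_le_coe.2 le_top)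
  beta_reduce
  rw [fderiv_clm_apply hd (by fun_prop), fderiv_clm_apply hd (by fun_prop)]
  simpa using hs.eq (restr S v) (restr S w)

/-- `T` preserves local functions and is linear on them. -/
structure LinOn {N : ℕ} (T : Fn N → Fn N) : Prop where
  loc : ∀ f, IsLocal f → IsLocal (T f)
  add : ∀ f h, IsLocal f → IsLocal h → T (f + h) = T f + T h
  smul : ∀ (c : ℝ) f, IsLocal f → T (c • f) = c • T f

lemma LinOn.zero {N : ℕ} {T : Fn N → Fn N} (hT : LinOn T) : T 0 = 0 := by
  simpa using hT.smul 0 0 isLocal_zero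

lemma LinOn.sum {N : ℕ} {T : Fn N → Fn N} (hT : LinOn T) {ι : Type*} {s : Finset ι}
    {f : ι → Fn N} (h : ∀ a ∈ s, IsLocal (f a)) : T (∑ a ∈ s, f a) = ∑ a ∈ s, T (f a) := by
  classical
  induction s using Finset.induction_on with
  | empty => simpa using hT.zero
  | insert a s ha ih =>
    have h' : ∀ b ∈ s, IsLocal (f b) := fun b hb => h b (Finset.mem_insert_of_mem hb)
    rw [Finset.sum_insert ha, Finset.sum_insert ha,
      hT.add _ _ (h a (Finset.mem_insert_self a s)) (IsLocal.sum h'), ih h']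

lemma linOn_id {N : ℕ} : LinOn (id : Fn N → Fn N) :=
  ⟨fun _ h => h, fun _ _ _ _ => rfl, fun _ _ _ => rfl⟩

lemma LinOn.comp {N : ℕ} {T R : Fn N → Fn N} (hT : LinOn T) (hR : LinOn R) : LinOn (T ∘ R) where
  loc f hf := hT.loc _ (hR.loc f hf)
  add f h hf hh := by
    simp only [Function.comp]
    rw [hR.add f h hf hh, hT.add _ _ (hR.loc f hf) (hR.loc h hh)]
  smul c f hf := by
    simp only [Function.comp]
    rw [hR.smul c f hf, hT.smul c _ (hR.loc f hf)]

lemma LinOn.iterate {N : ℕ} {T : Fn N → Fn N} (hT : LinOn T) (k : ℕ) : LinOn T^[k] := by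
  induction k with
  | zero => exact linOn_id
  | succ k ih => rw [Function.iterate_succ]; exact ih.comp hT

lemma linOn_dird {N : ℕ} (v : JetPt N) : LinOn (dird v) where
  loc f hf := hf.dird v
  add f h hf hh := by
    funext p
    exact ((hf.hasDerivAt v p).add (hh.hasDerivAt v p)).deriv
  smul c f hf := by
    funext p
    exact ((hf.hasDerivAt v p).const_mul c).deriv

/-- All jet coordinates on which `f` depends lie in `S`. -/
def SuppIn {N : ℕ} (S : Finset (MI N)) (f : Fn N) : Prop := ∀ J, J ∉ S → dird (eu J) f = 0

lemma IsLocal.exists_suppIn {N : ℕ} {f : Fn N} (hf : IsLocal f) : ∃ S, SuppIn S f := by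
  obtain ⟨S, g, hg⟩ := isLocal_iff.1 hf
  refine ⟨S, fun J hJ => ?_⟩
  have : restr S (eu J) = 0 := by
    ext K
    · simp [restr, eu]
    · have : K.1 ≠ J := fun h => hJ (h ▸ K.2)
      simp [restr, eu, this]
  funext p
  rw [(hg.dird (eu J)).2, this]
  simp

lemma SuppIn.mono {N : ℕ} {S T : Finset (MI N)} {f : Fn N} (h : SuppIn S f) (hST : S ⊆ T) :
    SuppIn T f := fun J hJ => h J fun hS => hJ (hST hS)

protected lemma SuppIn.dird {N : ℕ} {S : Finset (MI N)} {f : Fn N} (h : SuppIn S f) (hf : IsLocal f)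
    (v : JetPt N) : SuppIn S (dird v f) := fun J hJ => by
  rw [dird_comm _ _ hf, h J hJ, (linOn_dird v).zero]

/-! ### Total derivatives -/

lemma SuppIn.Dtot_eq {N : ℕ} {S : Finset (MI N)} {f : Fn N} (h : SuppIn S f) (i : Fin N) :
    Dtot i f = dird (ex i) f + ∑ J ∈ S, uc (inc i J) * dird (eu J) f := by
  funext p
  rw [Dtot, pderivX_eq, tsum_eq_sum (s := S)]
  · simp [uc, pderivU_eq]
  · intro J hJ
    rw [pderivU_eq, h J hJ]; simp

lemma linOn_Dtot {N : ℕ} (i : Fin N) : LinOn (Dtot i) where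
  loc f hf := by
    obtain ⟨S, hS⟩ := hf.exists_suppIn
    rw [hS.Dtot_eq]
    exact (hf.dird _).add (IsLocal.sum fun J _ => (isLocal_uc _).mul (hf.dird _))
  add f h hf hh := by
    classical
    obtain ⟨S, hS⟩ := hf.exists_suppIn
    obtain ⟨T, hT⟩ := hh.exists_suppIn
    have hS' := hS.mono (Finset.subset_union_left (s₂ := T))
    have hT' := hT.mono (Finset.subset_union_right (s₁ := S))
    have hST : SuppIn (S ∪ T) (f + h) := fun J hJ => by
      rw [(linOn_dird _).add f h hf hh, hS' J hJ, hT' J hJ, add_zero]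
    rw [hS'.Dtot_eq, hT'.Dtot_eq, hST.Dtot_eq]
    simp only [(linOn_dird _).add f h hf hh, mul_add, Finset.sum_add_distrib]
    ring
  smul c f hf := by
    obtain ⟨S, hS⟩ := hf.exists_suppIn
    have hS' : SuppIn S (c • f) := fun J hJ => by
      rw [(linOn_dird _).smul c f hf, hS J hJ, smul_zero]
    rw [hS.Dtot_eq, hS'.Dtot_eq]
    simp only [(linOn_dird _).smul c f hf, smul_add, Finset.smul_sum, mul_smul_comm]

lemma Dtot_mul {N : ℕ} (i : Fin N) {f h : Fn N} (hf : IsLocal f) (hh : IsLocal h) :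
    Dtot i (f * h) = Dtot i f * h + f * Dtot i h := by
  classical
  obtain ⟨S, hS⟩ := hf.exists_suppIn
  obtain ⟨T, hT⟩ := hh.exists_suppIn
  have hS' := hS.mono (Finset.subset_union_left (s₂ := T))
  have hT' := hT.mono (Finset.subset_union_right (s₁ := S))
  have hST : SuppIn (S ∪ T) (f * h) := fun J hJ => by
    rw [dird_mul _ hf hh, hS' J hJ, hT' J hJ]; simp
  rw [hS'.Dtot_eq, hT'.Dtot_eq, hST.Dtot_eq]
  simp only [dird_mul _ hf hh, mul_add, add_mul, Finset.sum_add_distrib, Finset.sum_mul,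
    Finset.mul_sum]
  have e1 : ∀ J, uc (inc i J) * (f * dird (eu J) h) = f * (uc (inc i J) * dird (eu J) h) :=
    fun J => by ring
  simp only [e1, mul_assoc]
  ring

lemma dird_uc {N : ℕ} (v : JetPt N) (J : MI N) : dird v (uc J) = fun _ => v.2 J := by
  funext p
  have : HasDerivAt (fun t : ℝ => p.2 J + t * v.2 J) (v.2 J) 0 := by
    simpa using ((hasDerivAt_id (0 : ℝ)).mul_const (v.2 J)).const_add (p.2 J)
  exact this.deriv

lemma dird_eu_uc {N : ℕ} (K J : MI N) :
    dird (eu K) (uc J) = if J = K then (1 : Fn N) else 0 := by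
  rw [dird_uc]
  funext p
  by_cases h : J = K
  · subst h; simp [eu]
  · simp [eu, h]

lemma dird_ex_uc {N : ℕ} (k : Fin N) (J : MI N) : dird (ex k) (uc J) = 0 := by
  rw [dird_uc]; rfl

lemma Dtot_uc {N : ℕ} (i : Fin N) (J : MI N) : Dtot i (uc J) = uc (inc i J) := by
  have : SuppIn {J} (uc J) := fun K hK => by
    rw [dird_eu_uc, if_neg]
    rintro rfl
    simp at hK
  rw [this.Dtot_eq, dird_ex_uc]
  simp [dird_eu_uc]

lemma dird_Dtot {N : ℕ} (v : JetPt N) (i : Fin N) {f : Fn N} (hf : IsLocal f)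
    {S : Finset (MI N)} (hS : SuppIn S f) :
    dird v (Dtot i f) =
      Dtot i (dird v f) + ∑ K ∈ S, dird v (uc (inc i K)) * dird (eu K) f := by
  rw [hS.Dtot_eq, (hS.dird hf v).Dtot_eq,
    (linOn_dird v).add _ _ (hf.dird _)
      (IsLocal.sum fun J _ => (isLocal_uc _).mul (hf.dird _)),
    (linOn_dird v).sum fun J _ => (isLocal_uc _).mul (hf.dird _)]
  simp only [dird_mul v (isLocal_uc _) (hf.dird _), Finset.sum_add_distrib, dird_comm v _ hf]
  ring

lemma dird_ex_Dtot {N : ℕ} (k i : Fin N) {f : Fn N} (hf : IsLocal f) :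
    dird (ex k) (Dtot i f) = Dtot i (dird (ex k) f) := by
  obtain ⟨S, hS⟩ := hf.exists_suppIn
  rw [dird_Dtot _ _ hf hS]
  simp [dird_ex_uc]

lemma dird_eu_Dtot {N : ℕ} (J : MI N) (i : Fin N) {f : Fn N} (hf : IsLocal f)
    {S : Finset (MI N)} (hS : SuppIn S f) :
    dird (eu J) (Dtot i f) =
      Dtot i (dird (eu J) f) + ∑ K ∈ S, if inc i K = J then dird (eu K) f else 0 := by
  rw [dird_Dtot _ _ hf hS]
  simp [dird_eu_uc]

lemma inc_apply {N : ℕ} (i k : Fin N) (J : MI N) : inc i J k = J k + if k = i then 1 else 0 := by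
  by_cases h : k = i
  · subst h; simp [inc]
  · simp [inc, h]

lemma inc_comm {N : ℕ} (i k : Fin N) (J : MI N) : inc i (inc k J) = inc k (inc i J) := by
  funext l
  simp only [inc_apply]
  ring

lemma inc_injective {N : ℕ} (i : Fin N) : Function.Injective (inc i) := by
  intro J K h
  funext l
  have := congrFun h l
  simpa [inc_apply] using this

lemma Dtot_comm {N : ℕ} (i k : Fin N) {f : Fn N} (hf : IsLocal f) :
    Dtot i (Dtot k f) = Dtot k (Dtot i f) := by
  classical
  obtain ⟨S, hS⟩ := hf.exists_suppIn
  obtain ⟨R, hR⟩ := ((linOn_Dtot i).loc f hf).exists_suppIn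
  set T := S ∪ S.image (inc i) ∪ R with hTdef
  have hST : S ⊆ T := by intro x hx; simp [hTdef, hx]
  have hT := hS.mono hST
  have hT' : SuppIn T (Dtot i f) := hR.mono (by intro x hx; simp [hTdef, hx])
  rw [hT'.Dtot_eq, hT.Dtot_eq k,
    (linOn_Dtot i).add _ _ (hf.dird _)
      (IsLocal.sum fun J _ => (isLocal_uc _).mul (hf.dird _)),
    (linOn_Dtot i).sum fun J _ => (isLocal_uc _).mul (hf.dird _)]
  simp only [Dtot_mul i (isLocal_uc _) (hf.dird _), Dtot_uc, Finset.sum_add_distrib,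
    dird_ex_Dtot k i hf, dird_eu_Dtot _ i hf hT, mul_add, Finset.mul_sum]
  -- the terms `u_{kJ} [∂/∂u_J, d/dx^i] f` collect to `u_{ikK} ∂f/∂u_K`
  have key : ∑ J ∈ T, ∑ K ∈ T, uc (inc k J) * (if inc i K = J then dird (eu K) f else 0)
      = ∑ K ∈ T, uc (inc i (inc k K)) * dird (eu K) f := by
    rw [Finset.sum_comm]
    refine Finset.sum_congr rfl fun K hK => ?_
    by_cases hKS : K ∈ S
    · have : inc i K ∈ T := by
        simp only [hTdef, Finset.mem_union, Finset.mem_image]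
        exact Or.inl (Or.inr ⟨K, hKS, rfl⟩)
      rw [Finset.sum_eq_single (inc i K)]
      · rw [if_pos rfl, inc_comm]
      · intro J _ hJ
        rw [if_neg (Ne.symm hJ), mul_zero]
      · exact fun h => absurd this h
    · simp [hS K hKS]
  rw [key]
  ring

/-! ### Iterated derivatives -/

/-- The composite, in the order of the list `l`, of the powers `(d k)^(a k)`. -/
def foldOp {ι X : Type*} (d : ι → X → X) (l : List ι) (a : ι → ℕ) : X → X :=
  l.foldr (fun k g => (d k)^[a k] ∘ g) id

lemma foldOp_cons {ι X : Type*} (d : ι → X → X) (k : ι) (l : List ι) (a : ι → ℕ) (f : X) :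
    foldOp d (k :: l) a f = (d k)^[a k] (foldOp d l a f) := rfl

lemma foldOp_zero {ι X : Type*} (d : ι → X → X) (l : List ι) (a : ι → ℕ)
    (ha : ∀ k ∈ l, a k = 0) (f : X) : foldOp d l a f = f := by
  induction l with
  | nil => rfl
  | cons k l ih =>
    rw [foldOp_cons, ha k (by simp), ih fun m hm => ha m (by simp [hm])]
    rfl

lemma foldOp_congr {ι X : Type*} (d : ι → X → X) (l : List ι) {a b : ι → ℕ}
    (h : ∀ k ∈ l, a k = b k) (f : X) : foldOp d l a f = foldOp d l b f := by
  induction l with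
  | nil => rfl
  | cons k l ih =>
    rw [foldOp_cons, foldOp_cons, h k (by simp), ih fun m hm => h m (by simp [hm])]

lemma linOn_foldOp {N : ℕ} {ι : Type*} {d : ι → Fn N → Fn N} (hd : ∀ k, LinOn (d k))
    (l : List ι) (a : ι → ℕ) : LinOn (foldOp d l a) := by
  induction l with
  | nil => exact linOn_id
  | cons k l ih => exact ((hd k).iterate _).comp ih

lemma comm_iterate {N : ℕ} {T R : Fn N → Fn N} (hR : LinOn R)
    (hc : ∀ f, IsLocal f → T (R f) = R (T f)) (m : ℕ) {f : Fn N} (hf : IsLocal f) :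
    T (R^[m] f) = R^[m] (T f) := by
  induction m with
  | zero => rfl
  | succ m ih =>
    rw [Function.iterate_succ_apply', Function.iterate_succ_apply',
      hc _ ((hR.iterate m).loc f hf), ih]

lemma comm_foldOp {N : ℕ} {ι : Type*} {d : ι → Fn N → Fn N} (hd : ∀ k, LinOn (d k))
    {T : Fn N → Fn N} (hc : ∀ k f, IsLocal f → T (d k f) = d k (T f))
    (l : List ι) (a : ι → ℕ) {f : Fn N} (hf : IsLocal f) :
    T (foldOp d l a f) = foldOp d l a (T f) := by
  induction l with
  | nil => rfl
  | cons k l ih =>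
    rw [foldOp_cons, foldOp_cons,
      comm_iterate (hd k) (hc k) _ ((linOn_foldOp hd l a).loc f hf), ih]

lemma foldOp_succ {N : ℕ} {ι : Type*} {d : ι → Fn N → Fn N} (hd : ∀ k, LinOn (d k))
    (hc : ∀ k m f, IsLocal f → d k (d m f) = d m (d k f)) {l : List ι} (hl : l.Nodup)
    {i : ι} (hi : i ∈ l) {a b : ι → ℕ} (hbi : b i = a i + 1) (hb : ∀ k, k ≠ i → b k = a k)
    {f : Fn N} (hf : IsLocal f) : foldOp d l b f = d i (foldOp d l a f) := by
  induction l with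
  | nil => simp at hi
  | cons k l ih =>
    rw [List.nodup_cons] at hl
    rw [foldOp_cons, foldOp_cons]
    by_cases hk : k = i
    · subst hk
      rw [hbi, Function.iterate_succ_apply',
        foldOp_congr d l (b := a) fun m hm => hb m fun h => hl.1 (h ▸ hm)]
    · have hil : i ∈ l := by
        rcases List.mem_cons.1 hi with h | h
        · exact absurd h.symm hk
        · exact h
      rw [hb k hk, ih hl.2 hil,
        comm_iterate (hd k) (fun f hf => hc i k f hf) _ ((linOn_foldOp hd l a).loc f hf)]

lemma foldOp_perm {N : ℕ} {ι : Type*} {d : ι → Fn N → Fn N} (hd : ∀ k, LinOn (d k))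
    (hc : ∀ k m f, IsLocal f → d k (d m f) = d m (d k f)) {l l' : List ι} (h : l.Perm l')
    (a : ι → ℕ) {f : Fn N} (hf : IsLocal f) : foldOp d l a f = foldOp d l' a f := by
  induction h with
  | nil => rfl
  | cons k _ ih => rw [foldOp_cons, foldOp_cons, ih]
  | swap k m l =>
    simp only [foldOp_cons]
    have hl := (linOn_foldOp hd l a).loc f hf
    refine comm_iterate (hd k) (fun g hg => ?_) _ hl
    exact (comm_iterate (hd m) (fun g hg => hc k m g hg) _ hg).symm
  | trans _ _ ih₁ ih₂ => exact ih₁.trans ih₂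

lemma linOn_pderivU {N : ℕ} (J : MI N) : LinOn (pderivU J) := by
  have : (pderivU J : Fn N → Fn N) = dird (eu J) := funext (pderivU_eq J)
  rw [this]; exact linOn_dird _

lemma pderivU_comm {N : ℕ} (J K : MI N) (f : Fn N) (hf : IsLocal f) :
    pderivU J (pderivU K f) = pderivU K (pderivU J f) := by
  simp only [pderivU_eq]; exact dird_comm _ _ hf

lemma linOn_DPow {N : ℕ} (I : MI N) : LinOn (DPow I) :=
  linOn_foldOp linOn_Dtot (List.finRange N) I

lemma DPow_zero {N : ℕ} (f : Fn N) : DPow 0 f = f :=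
  foldOp_zero Dtot (List.finRange N) 0 (fun _ _ => rfl) f

lemma DPow_inc {N : ℕ} (i : Fin N) (I : MI N) {f : Fn N} (hf : IsLocal f) :
    DPow (inc i I) f = Dtot i (DPow I f) :=
  foldOp_succ linOn_Dtot (fun k m _ h => Dtot_comm k m h) (List.nodup_finRange N)
    (List.mem_finRange i) (by simp [inc_apply]) (fun k hk => by simp [inc_apply, hk]) hf

lemma DPow_Dtot {N : ℕ} (i : Fin N) (I : MI N) {f : Fn N} (hf : IsLocal f) :
    DPow I (Dtot i f) = Dtot i (DPow I f) :=
  (comm_foldOp linOn_Dtot (fun k _ h => Dtot_comm i k h) (List.finRange N) I hf).symm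

lemma linOn_UPow {N : ℕ} (α : MI N →₀ ℕ) : LinOn (UPow α) :=
  linOn_foldOp linOn_pderivU α.support.toList α

lemma UPow_zero {N : ℕ} (f : Fn N) : UPow 0 f = f :=
  foldOp_zero pderivU _ _ (fun _ _ => rfl) f

lemma pderivU_UPow {N : ℕ} (J : MI N) (α : MI N →₀ ℕ) {f : Fn N} (hf : IsLocal f) :
    pderivU J (UPow α f) = UPow α (pderivU J f) :=
  comm_foldOp linOn_pderivU (fun k f h => pderivU_comm J k f h) α.support.toList α hf

lemma support_add_single {N : ℕ} (α : MI N →₀ ℕ) (J : MI N) :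
    (α + Finsupp.single J 1).support = insert J α.support := by
  classical
  ext K
  by_cases h : K = J
  · subst h; simp
  · simp [h]

lemma UPow_add_single {N : ℕ} (α : MI N →₀ ℕ) (J : MI N) {f : Fn N} (hf : IsLocal f) :
    UPow (α + Finsupp.single J 1) f = pderivU J (UPow α f) := by
  classical
  change foldOp pderivU (α + Finsupp.single J 1).support.toList _ f
    = pderivU J (foldOp pderivU α.support.toList α f)
  rw [support_add_single]
  by_cases hJ : J ∈ α.support
  · rw [Finset.insert_eq_of_mem hJ]
    exact foldOp_succ linOn_pderivU pderivU_comm (Finset.nodup_toList _)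
      (Finset.mem_toList.2 hJ) (by simp) (fun k hk => by simp [hk]) hf
  · rw [foldOp_perm linOn_pderivU pderivU_comm (Finset.toList_insert hJ) _ hf, foldOp_cons,
      foldOp_congr pderivU α.support.toList (b := α)]
    · have : α J = 0 := by simpa using hJ
      simp [this]
    · intro k hk
      have : k ≠ J := fun h => hJ (h ▸ Finset.mem_toList.1 hk)
      simp [this]

lemma finsupp_add_single_induction {ι : Type*} {p : (ι →₀ ℕ) → Prop} (h0 : p 0)
    (hs : ∀ α J, p α → p (α + Finsupp.single J 1)) (α : ι →₀ ℕ) : p α := by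
  have key : ∀ β, p β → p (β + α) := by
    induction α using Finsupp.induction_linear with
    | zero => intro β hβ; simpa using hβ
    | add f g hf hg => intro β hβ; rw [← add_assoc]; exact hg _ (hf _ hβ)
    | single J n =>
      induction n with
      | zero => intro β hβ; simpa using hβ
      | succ n ih =>
        intro β hβ
        rw [Finsupp.single_add, ← add_assoc]
        exact hs _ _ (ih _ hβ)
  simpa using key 0 h0

lemma degf_add_single {N : ℕ} (α : MI N →₀ ℕ) (J : MI N) :
    degf (α + Finsupp.single J 1) = max (∑ i, J i) (degf α) := by
  classical
  rw [degf, support_add_single, Finset.sup_insert]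
  rfl

lemma LinOn.linearCombination {N : ℕ} {T : Fn N → Fn N} (hT : LinOn T) {ι : Type*}
    {v : ι → Fn N} (hv : ∀ a, IsLocal (v a)) (c : ι →₀ ℝ) :
    T (Finsupp.linearCombination ℝ v c) = Finsupp.linearCombination ℝ (fun a => T (v a)) c := by
  rw [Finsupp.linearCombination_apply, Finsupp.linearCombination_apply, Finsupp.sum, Finsupp.sum,
    hT.sum fun a _ => (hv a).smul _]
  exact Finset.sum_congr rfl fun a _ => hT.smul _ _ (hv a)

/-- `[∂/∂u_J, d/dx^i]` is `∂/∂u_K` if `J = iK`, and vanishes if the `i`-th entry of `J` is `0`. -/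
lemma pderivU_Dtot {N : ℕ} (J : MI N) (i : Fin N) :
    (∀ f : Fn N, IsLocal f → pderivU J (Dtot i f) = Dtot i (pderivU J f)) ∨
    ∃ K, ∑ l, J l = ∑ l, K l + 1 ∧
      ∀ f : Fn N, IsLocal f → pderivU J (Dtot i f) = Dtot i (pderivU J f) + pderivU K f := by
  classical
  by_cases h : ∃ K, inc i K = J
  · obtain ⟨K, rfl⟩ := h
    refine Or.inr ⟨K, by simp [inc_apply, Finset.sum_add_distrib], fun f hf => ?_⟩
    obtain ⟨S, hS⟩ := hf.exists_suppIn
    simp only [pderivU_eq]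
    rw [dird_eu_Dtot _ i hf (hS.mono (Finset.subset_insert K S)), Finset.sum_eq_single K]
    · simp
    · intro L _ hL
      rw [if_neg fun h => hL (inc_injective i h)]
    · simp
  · refine Or.inl fun f hf => ?_
    obtain ⟨S, hS⟩ := hf.exists_suppIn
    simp only [pderivU_eq]
    rw [dird_eu_Dtot _ i hf hS, Finset.sum_eq_zero, add_zero]
    exact fun L _ => if_neg fun hL => h ⟨L, hL⟩

/-- The commutator `[(∂/∂u)^α, d/dx^i]` is a constant-coefficient combination of operators
`(∂/∂u)^β` whose degree drops by at most one. -/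
lemma UPow_Dtot {N : ℕ} (i : Fin N) (α : MI N →₀ ℕ) :
    ∃ c : (MI N →₀ ℕ) →₀ ℝ, (∀ β ∈ c.support, degf α ≤ degf β + 1) ∧
      ∀ f : Fn N, IsLocal f → UPow α (Dtot i f) =
        Dtot i (UPow α f) + Finsupp.linearCombination ℝ (fun β => UPow β f) c := by
  classical
  induction α using finsupp_add_single_induction with
  | h0 => exact ⟨0, by simp, fun f _ => by simp [UPow_zero]⟩
  | hs α J ih =>
    obtain ⟨c, hc, hcf⟩ := ih
    have hdeg : ∀ β ∈ (c.mapDomain (· + Finsupp.single J 1)).support,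
        degf (α + Finsupp.single J 1) ≤ degf β + 1 := by
      intro β hβ
      obtain ⟨γ, hγ, rfl⟩ := Finset.mem_image.1 (Finsupp.mapDomain_support hβ)
      have := hc γ hγ
      simp only [degf_add_single]
      omega
    have hmain : ∀ f : Fn N, IsLocal f → UPow (α + Finsupp.single J 1) (Dtot i f) =
        pderivU J (Dtot i (UPow α f)) + Finsupp.linearCombination ℝ (fun β => UPow β f)
          (c.mapDomain (· + Finsupp.single J 1)) := by
      intro f hf
      have hU : ∀ β, IsLocal (UPow β f) := fun β => (linOn_UPow β).loc f hf
      have hUD := (linOn_Dtot i).loc _ (hU α)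
      have hsum : IsLocal (Finsupp.linearCombination ℝ (fun β => UPow β f) c) := by
        rw [Finsupp.linearCombination_apply]
        exact IsLocal.sum fun β _ => (hU β).smul _
      rw [UPow_add_single _ _ ((linOn_Dtot i).loc f hf), hcf f hf,
        (linOn_pderivU J).add _ _ hUD hsum, (linOn_pderivU J).linearCombination hU,
        Finsupp.linearCombination_mapDomain]
      simp only [Function.comp_def, UPow_add_single _ J hf]
    rcases pderivU_Dtot J i with h | ⟨K, hK, h⟩
    · refine ⟨_, hdeg, fun f hf => ?_⟩
      rw [hmain f hf, h _ ((linOn_UPow α).loc f hf), UPow_add_single _ _ hf]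
    · refine ⟨c.mapDomain (· + Finsupp.single J 1) + Finsupp.single (α + Finsupp.single K 1) 1,
        ?_, fun f hf => ?_⟩
      · intro β hβ
        rcases Finset.mem_union.1 (Finsupp.support_add hβ) with hβ | hβ
        · exact hdeg β hβ
        · have := Finset.mem_singleton.1 (Finsupp.support_single_subset hβ)
          subst this
          simp only [degf_add_single]
          omega
      · rw [hmain f hf, h _ ((linOn_UPow α).loc f hf), UPow_add_single _ J hf, map_add,
          Finsupp.linearCombination_single, one_smul, UPow_add_single _ K hf]
        ring

/-- High-degree vertical derivatives kill a local function, as it depends on only finitely many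
jet coordinates. -/
lemma IsLocal.exists_UPow_eq_zero {N : ℕ} {f : Fn N} (hf : IsLocal f) :
    ∃ m : ℕ, ∀ α, m < degf α → UPow α f = 0 := by
  classical
  obtain ⟨S, hS⟩ := hf.exists_suppIn
  refine ⟨S.sup fun J => ∑ i, J i, fun α hα => ?_⟩
  obtain ⟨J, hJ, hlt⟩ := (Finset.lt_sup_iff).1 hα
  have hJS : J ∉ S := fun h => absurd (Finset.le_sup (f := fun J : MI N => ∑ i, J i) h)
    (not_le.2 hlt)
  have hα' : α - Finsupp.single J 1 + Finsupp.single J 1 = α := by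
    refine tsub_add_cancel_of_le (Finsupp.single_le_iff.2 ?_)
    exact Nat.one_le_iff_ne_zero.2 (Finsupp.mem_support_iff.1 hJ)
  rw [← hα', UPow_add_single _ _ hf, pderivU_UPow _ _ hf, pderivU_eq, hS J hJS,
    (linOn_UPow _).zero]

/-! ### The elementary polydifferential operators -/

/-- The `k`-th factor of the elementary operator indexed by `s`; the slot `k = 0` carries no
total derivatives, these being applied to the whole product instead. -/
noncomputable def fac {N n : ℕ} [NeZero n] (s : Idx N n) (f : Fin n → Fn N) (k : Fin n) : Fn N :=
  DPow (if k = 0 then 0 else s.1 k) (UPow (s.2 k) (f k))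

/-- The product `(∂/∂u)^{α_1} f_1 · Π_{k≥2} (d/dx)^{I_k} (∂/∂u)^{α_k} f_k`. -/
noncomputable def opP {N n : ℕ} [NeZero n] (s : Idx N n) (f : Fin n → Fn N) : Fn N :=
  ∏ k, fac s f k

/-- The total differential degree `Σ_k deg_f(α_k)` of an index. -/
def deg {N n : ℕ} (s : Idx N n) : ℕ := ∑ k, degf (s.2 k)

lemma realizeP_eq {N n : ℕ} [NeZero n] (q : OpData N n) (f : Fin n → Fn N) (pt : JetPt N) :
    realizeP q f pt = ∑' s, q s pt * DPow (s.1 0) (opP s f) pt := by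
  rw [realizeP]
  refine tsum_congr fun s => ?_
  congr 3
  funext p
  rw [opP, Finset.prod_apply]
  refine Finset.prod_congr rfl fun k _ => ?_
  by_cases hk : k = 0
  · simp [fac, hk, DPow_zero]
  · simp [fac, hk]

lemma isLocal_fac {N n : ℕ} [NeZero n] (s : Idx N n) {f : Fin n → Fn N} (hf : LocalTuple f)
    (k : Fin n) : IsLocal (fac s f k) :=
  (linOn_DPow _).loc _ ((linOn_UPow _).loc _ (hf k))

lemma isLocal_opP {N n : ℕ} [NeZero n] (s : Idx N n) {f : Fin n → Fn N} (hf : LocalTuple f) :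
    IsLocal (opP s f) :=
  IsLocal.prod fun k _ => isLocal_fac s hf k

lemma opP_split {N n : ℕ} [NeZero n] (s : Idx N n) (f : Fin n → Fn N) (k : Fin n) :
    opP s f = fac s f k * ∏ l ∈ Finset.univ.erase k, fac s f l :=
  (Finset.mul_prod_erase Finset.univ (fac s f) (Finset.mem_univ k)).symm

/-- Raises the `i`-th entry of the total-derivative exponent in slot `k`. -/
def shift {N n : ℕ} (i : Fin N) (k : Fin n) (s : Idx N n) : Idx N n :=
  (Function.update s.1 k (inc i (s.1 k)), s.2)

/-- Replaces the vertical exponent in slot `k`. -/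
def repl {N n : ℕ} (k : Fin n) (s : Idx N n) (β : MI N →₀ ℕ) : Idx N n :=
  (s.1, Function.update s.2 k β)

lemma opP_shift {N n : ℕ} [NeZero n] (i : Fin N) {k : Fin n} (hk : k ≠ 0) (s : Idx N n)
    {f : Fin n → Fn N} (hf : LocalTuple f) :
    opP (shift i k s) f = Dtot i (fac s f k) * ∏ l ∈ Finset.univ.erase k, fac s f l := by
  rw [opP_split _ _ k]
  congr 1
  · simp only [fac, shift, if_neg hk, Function.update_self]
    exact DPow_inc i _ ((linOn_UPow _).loc _ (hf k))
  · refine Finset.prod_congr rfl fun l hl => ?_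
    simp [fac, shift, Finset.ne_of_mem_erase hl]

lemma opP_shift_zero {N n : ℕ} [NeZero n] (i : Fin N) (s : Idx N n) (f : Fin n → Fn N) :
    opP (shift i 0 s) f = opP s f := by
  refine Finset.prod_congr rfl fun l _ => ?_
  by_cases hl : l = 0
  · simp [fac, shift, hl]
  · simp [fac, shift, hl]

lemma opP_repl {N n : ℕ} [NeZero n] (k : Fin n) (s : Idx N n) (β : MI N →₀ ℕ)
    (f : Fin n → Fn N) :
    opP (repl k s β) f = DPow (if k = 0 then 0 else s.1 k) (UPow β (f k)) *
      ∏ l ∈ Finset.univ.erase k, fac s f l := by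
  rw [opP_split _ _ k]
  congr 1
  · simp [fac, repl]
  · refine Finset.prod_congr rfl fun l hl => ?_
    simp [fac, repl, Finset.ne_of_mem_erase hl]

lemma deg_shift {N n : ℕ} (i : Fin N) (k : Fin n) (s : Idx N n) : deg (shift i k s) = deg s := rfl

lemma deg_repl {N n : ℕ} (k : Fin n) (s : Idx N n) {β : MI N →₀ ℕ}
    (h : degf (s.2 k) ≤ degf β + 1) : deg s ≤ deg (repl k s β) + 1 := by
  rw [deg, deg, ← Finset.add_sum_erase _ _ (Finset.mem_univ k),
    ← Finset.add_sum_erase Finset.univ (fun l => degf ((repl k s β).2 l)) (Finset.mem_univ k)]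
  have : ∑ l ∈ Finset.univ.erase k, degf ((repl k s β).2 l)
      = ∑ l ∈ Finset.univ.erase k, degf (s.2 l) :=
    Finset.sum_congr rfl fun l hl => by simp [repl, Finset.ne_of_mem_erase hl]
  rw [this]
  simp only [repl, Function.update_self]
  omega

lemma Dtot_prod {N : ℕ} {ι : Type*} [DecidableEq ι] (i : Fin N) (u : Finset ι) {g : ι → Fn N}
    (hg : ∀ k, IsLocal (g k)) :
    Dtot i (∏ k ∈ u, g k) = ∑ k ∈ u, Dtot i (g k) * ∏ l ∈ u.erase k, g l := by
  induction u using Finset.induction_on with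
  | empty =>
    have h1 := Dtot_mul (N := N) i isLocal_one isLocal_one
    simpa using h1
  | insert a u ha ih =>
    rw [Finset.prod_insert ha, Dtot_mul i (hg a) (IsLocal.prod fun k _ => hg k), ih,
      Finset.sum_insert ha, Finset.erase_insert ha, Finset.mul_sum]
    congr 1
    refine Finset.sum_congr rfl fun k hk => ?_
    have hka : a ≠ k := fun h => ha (h ▸ hk)
    rw [Finset.erase_insert_of_ne hka, Finset.prod_insert (by simp [ha])]
    ring

lemma Dtot_opP {N n : ℕ} [NeZero n] (i : Fin N) (s : Idx N n) {f : Fin n → Fn N}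
    (hf : LocalTuple f) :
    Dtot i (opP s f) = Dtot i (fac s f 0) * ∏ l ∈ Finset.univ.erase 0, fac s f l +
      ∑ k ∈ Finset.univ.erase 0, opP (shift i k s) f := by
  rw [opP, Dtot_prod i _ (isLocal_fac s hf), ← Finset.add_sum_erase _ _ (Finset.mem_univ 0)]
  congr 1
  exact Finset.sum_congr rfl fun k hk => (opP_shift i (Finset.ne_of_mem_erase hk) s hf).symm

lemma localTuple_update {N n : ℕ} {f : Fin n → Fn N} (hf : LocalTuple f) (i : Fin N)
    (j : Fin n) : LocalTuple (Function.update f j (Dtot i (f j))) := by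
  intro k
  by_cases hk : k = j
  · subst hk; simpa using (linOn_Dtot i).loc _ (hf k)
  · simpa [hk] using hf k

/-- Precomposing an elementary product with `d/dx^i` in slot `j` gives a constant-coefficient
combination of elementary products, plus the total derivative of the product when `j` is the
distinguished slot, where `d/dx_1 = d/dy_1 - Σ_{k≥2} d/dy_k`. -/
lemma opP_precomp {N n : ℕ} [NeZero n] (i : Fin N) (j : Fin n) (s : Idx N n) :
    ∃ e : Idx N n →₀ ℝ, (∀ t ∈ e.support, t.1 0 = s.1 0 ∧ deg s ≤ deg t + 1) ∧
      ∀ f, LocalTuple f → opP s (Function.update f j (Dtot i (f j))) =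
        (if j = 0 then Dtot i (opP s f) else 0) +
          Finsupp.linearCombination ℝ (fun t => opP t f) e := by
  classical
  obtain ⟨c, hc, hcf⟩ := UPow_Dtot i (s.2 j)
  have hrepl : ∀ t ∈ (c.mapDomain (repl j s)).support, t.1 0 = s.1 0 ∧ deg s ≤ deg t + 1 := by
    intro t ht
    obtain ⟨β, hβ, rfl⟩ := Finset.mem_image.1 (Finsupp.mapDomain_support ht)
    exact ⟨rfl, deg_repl j s (hc β hβ)⟩
  have hmain : ∀ f, LocalTuple f → opP s (Function.update f j (Dtot i (f j))) =
      Dtot i (fac s f j) * ∏ l ∈ Finset.univ.erase j, fac s f l +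
        Finsupp.linearCombination ℝ (fun t => opP t f) (c.mapDomain (repl j s)) := by
    intro f hf
    have hU : ∀ β, IsLocal (UPow β (f j)) := fun β => (linOn_UPow β).loc _ (hf j)
    have hsum : IsLocal (Finsupp.linearCombination ℝ (fun β => UPow β (f j)) c) := by
      rw [Finsupp.linearCombination_apply]
      exact IsLocal.sum fun β _ => (hU β).smul _
    have hprod : ∏ l ∈ Finset.univ.erase j, fac s (Function.update f j (Dtot i (f j))) l
        = ∏ l ∈ Finset.univ.erase j, fac s f l :=
      Finset.prod_congr rfl fun l hl => by simp [fac, Finset.ne_of_mem_erase hl]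
    rw [opP_split _ _ j, hprod, Finsupp.linearCombination_mapDomain]
    simp only [Function.comp_def, opP_repl]
    rw [fac, Function.update_self, hcf _ (hf j),
      (linOn_DPow _).add _ _ ((linOn_Dtot i).loc _ (hU _)) hsum, DPow_Dtot _ _ (hU _), add_mul,
      (linOn_DPow _).linearCombination hU]
    congr 1
    simp only [Finsupp.linearCombination_apply, Finsupp.sum, Finset.sum_mul, smul_mul_assoc]
  by_cases hj : j = 0
  · subst hj
    refine ⟨c.mapDomain (repl 0 s) - ∑ k ∈ Finset.univ.erase 0, Finsupp.single (shift i k s) 1,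
      ?_, fun f hf => ?_⟩
    · intro t ht
      rcases Finset.mem_union.1 (Finsupp.support_sub ht) with ht | ht
      · exact hrepl t ht
      · obtain ⟨k, hk, ht⟩ := Finset.mem_biUnion.1 (Finsupp.support_finsetSum ht)
        have := Finset.mem_singleton.1 (Finsupp.support_single_subset ht)
        subst this
        refine ⟨?_, by rw [deg_shift]; omega⟩
        simp [shift, (Finset.ne_of_mem_erase hk).symm]
    · rw [hmain f hf, if_pos rfl, Dtot_opP i s hf, map_sub, map_sum]
      simp only [Finsupp.linearCombination_single, one_smul]
      ring
  · refine ⟨c.mapDomain (repl j s) + Finsupp.single (shift i j s) 1, ?_, fun f hf => ?_⟩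
    · intro t ht
      rcases Finset.mem_union.1 (Finsupp.support_add ht) with ht | ht
      · exact hrepl t ht
      · have := Finset.mem_singleton.1 (Finsupp.support_single_subset ht)
        subst this
        refine ⟨?_, by rw [deg_shift]; omega⟩
        simp [shift, Ne.symm hj]
    · rw [hmain f hf, if_neg hj, ← opP_shift i hj s hf, map_add,
        Finsupp.linearCombination_single, one_smul]
      ring

/-- The sign `(-1)^{|K|}`. -/
noncomputable def sgn {N : ℕ} (K : MI N) : ℝ := (-1) ^ ∑ i, K i

lemma sgn_inc {N : ℕ} (i : Fin N) (K : MI N) : sgn (inc i K) = -sgn K := by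
  simp [sgn, inc_apply, Finset.sum_add_distrib, pow_succ]

/-- Expansion of `T_s ∘ d/dx^i_j`, `T_s = (d/dx)^{I_1} ∘ opP s`, in elementary operators, with
the effect of the same coefficients on the characteristic of `g · T_s`: since formal integration
by parts turns `(d/dx)^{I_1}` into `(-1)^{|I_1|} (d/dx)^{I_1} g`, a factor `d/dx^i` on the whole
product becomes a total derivative of the characteristic. -/
lemma exists_coeff {N n : ℕ} [NeZero n] (i : Fin N) (j : Fin n) (s : Idx N n) :
    ∃ c : Idx N n →₀ ℝ, (∀ t ∈ c.support, deg s ≤ deg t + 1) ∧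
      (∀ f, LocalTuple f → DPow (s.1 0) (opP s (Function.update f j (Dtot i (f j)))) =
        Finsupp.linearCombination ℝ (fun t => DPow (t.1 0) (opP t f)) c) ∧
      ∀ g, IsLocal g → ∀ f, LocalTuple f →
        Finsupp.linearCombination ℝ (fun t => sgn (t.1 0) • (DPow (t.1 0) g * opP t f)) c =
          sgn (s.1 0) • (DPow (s.1 0) g * opP s (Function.update f j (Dtot i (f j)))) -
            if j = 0 then Dtot i (sgn (s.1 0) • (DPow (s.1 0) g * opP s f)) else 0 := by
  classical
  obtain ⟨e, he, hef⟩ := opP_precomp i j s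
  have h1 : ∀ f, LocalTuple f →
      DPow (s.1 0) (Finsupp.linearCombination ℝ (fun t => opP t f) e) =
        Finsupp.linearCombination ℝ (fun t => DPow (t.1 0) (opP t f)) e := by
    intro f hf
    rw [(linOn_DPow _).linearCombination fun t => isLocal_opP t hf,
      Finsupp.linearCombination_apply, Finsupp.linearCombination_apply]
    exact Finset.sum_congr rfl fun t ht => by beta_reduce; rw [(he t ht).1]
  have h2 : ∀ g f, Finsupp.linearCombination ℝ
      (fun t => sgn (t.1 0) • (DPow (t.1 0) g * opP t f)) e = sgn (s.1 0) • (DPow (s.1 0) g *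
        Finsupp.linearCombination ℝ (fun t => opP t f) e) := by
    intro g f
    rw [Finsupp.linearCombination_apply, Finsupp.linearCombination_apply, Finsupp.sum,
      Finsupp.sum, Finset.mul_sum, Finset.smul_sum]
    refine Finset.sum_congr rfl fun t ht => ?_
    rw [(he t ht).1, mul_smul_comm, smul_comm]
  by_cases hj : j = 0
  · refine ⟨e + Finsupp.single (shift i 0 s) 1, ?_, ?_, ?_⟩
    · intro t ht
      rcases Finset.mem_union.1 (Finsupp.support_add ht) with ht | ht
      · exact (he t ht).2
      · have := Finset.mem_singleton.1 (Finsupp.support_single_subset ht)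
        subst this
        rw [deg_shift]; omega
    · intro f hf
      have hP := isLocal_opP s hf
      have hsum : IsLocal (Finsupp.linearCombination ℝ (fun t => opP t f) e) := by
        rw [Finsupp.linearCombination_apply]
        exact IsLocal.sum fun t _ => (isLocal_opP t hf).smul _
      rw [hef f hf, if_pos hj, (linOn_DPow _).add _ _ ((linOn_Dtot i).loc _ hP) hsum, h1 f hf,
        map_add, Finsupp.linearCombination_single, one_smul, opP_shift_zero, DPow_Dtot i _ hP]
      simp only [shift, Function.update_self]
      rw [DPow_inc i _ hP, add_comm]
    · intro g hg f hf
      have hP := isLocal_opP s hf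
      have hD := (linOn_DPow (s.1 0)).loc g hg
      rw [hef f hf, if_pos hj, if_pos hj, map_add, h2, Finsupp.linearCombination_single, one_smul,
        opP_shift_zero, (linOn_Dtot i).smul _ _ (hD.mul hP), Dtot_mul i hD hP]
      simp only [shift, Function.update_self]
      rw [DPow_inc i _ hg, sgn_inc]
      simp only [neg_smul, mul_add, smul_add]
      ring
  · refine ⟨e, fun t ht => (he t ht).2, fun f hf => ?_, fun g _ f hf => ?_⟩
    · rw [hef f hf, if_neg hj, zero_add, h1 f hf]
    · rw [hef f hf, if_neg hj, if_neg hj, zero_add, sub_zero, h2]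

/-! ### Coefficient data and characteristics -/

lemma exists_opP_eq_zero {N n : ℕ} [NeZero n] {f : Fin n → Fn N} (hf : LocalTuple f) :
    ∃ m : ℕ, ∀ s : Idx N n, m < deg s → opP s f = 0 := by
  choose M hM using fun k => (hf k).exists_UPow_eq_zero
  refine ⟨∑ k, M k, fun s hs => ?_⟩
  obtain ⟨k, _, hk⟩ := Finset.exists_lt_of_sum_lt hs
  refine Finset.prod_eq_zero (Finset.mem_univ k) ?_
  rw [fac, hM k _ hk, (linOn_DPow _).zero]

lemma realizeP_eq_sum {N n : ℕ} [NeZero n] {q : OpData N n} {f : Fin n → Fn N} {m : ℕ}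
    (hm : ∀ s : Idx N n, m < deg s → opP s f = 0) {T : Finset (Idx N n)}
    (hT : ∀ s, s ∉ T → deg s ≤ m → q s = 0) :
    realizeP q f = ∑ s ∈ T, q s * DPow (s.1 0) (opP s f) := by
  funext pt
  rw [realizeP_eq, tsum_eq_sum (s := T)]
  · simp
  · intro s hs
    rcases le_or_gt (deg s) m with h | h
    · simp [hT s hs h]
    · simp [hm s h, (linOn_DPow _).zero]

lemma realizeP_chiData_eq_sum {N n : ℕ} [NeZero n] {q : OpData N n} {f : Fin n → Fn N} {m : ℕ}
    (hm : ∀ s : Idx N n, m < deg s → opP s f = 0) {T : Finset (Idx N n)}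
    (hT : ∀ s, s ∉ T → deg s ≤ m → q s = 0) :
    realizeP (chiData q) f = ∑ s ∈ T, sgn (s.1 0) • (DPow (s.1 0) (q s) * opP s f) := by
  classical
  set Z : Idx N n → Idx N n := fun s => (Function.update s.1 0 0, s.2) with hZ
  have hZ0 : ∀ s, (Z s).1 0 = 0 := fun s => by simp [hZ]
  have hZP : ∀ s, opP (Z s) f = opP s f := fun s =>
    Finset.prod_congr rfl fun l _ => by
      by_cases hl : l = 0
      · simp [fac, hZ, hl]
      · simp [fac, hZ, hl]
  have hZup : ∀ t : Idx N n, t.1 0 = 0 → ∀ K, Z (Function.update t.1 0 K, t.2) = t := by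
    intro t ht K
    simp only [hZ, Function.update_idem]
    rw [← ht, Function.update_eq_self]
  have hupZ : ∀ s : Idx N n, (Function.update (Z s).1 0 (s.1 0), (Z s).2) = s := by
    intro s
    simp only [hZ, Function.update_idem, Function.update_eq_self]
  funext pt
  rw [realizeP_eq, tsum_eq_sum (s := T.image Z), Finset.sum_apply,
    ← Finset.sum_fiberwise_of_maps_to (g := Z) (t := T.image Z)
      fun s hs => Finset.mem_image_of_mem Z hs]
  · refine Finset.sum_congr rfl fun t ht => ?_
    have ht0 : t.1 0 = 0 := by
      obtain ⟨s, _, rfl⟩ := Finset.mem_image.1 ht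
      exact hZ0 s
    rw [ht0, DPow_zero]
    rcases le_or_gt (deg t) m with h | h
    · have hsum : chiData q t pt
          = ∑ s ∈ T with Z s = t, sgn (s.1 0) * DPow (s.1 0) (q s) pt := by
        rw [chiData, if_pos ht0,
          tsum_eq_sum (s := ({s ∈ T | Z s = t} : Finset _).image fun s => s.1 0),
          Finset.sum_image]
        · refine Finset.sum_congr rfl fun s hs => ?_
          rw [← (Finset.mem_filter.1 hs).2, hupZ]
          rfl
        · intro s hs s' hs' hss
          have h1 := (Finset.mem_filter.1 hs).2
          have h2 := (Finset.mem_filter.1 hs').2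
          have hss : s.1 0 = s'.1 0 := hss
          rw [← hupZ s, ← hupZ s', h1, h2, hss]
        · intro K hK
          have : q (Function.update t.1 0 K, t.2) = 0 := by
            refine hT _ (fun hmem => hK ?_) h
            exact Finset.mem_image.2 ⟨_, Finset.mem_filter.2 ⟨hmem, hZup t ht0 K⟩, by simp⟩
          simp [this, (linOn_DPow _).zero]
      rw [hsum, Finset.sum_mul]
      refine Finset.sum_congr rfl fun s hs => ?_
      rw [← (Finset.mem_filter.1 hs).2, hZP]
      simp [mul_assoc]
    · rw [hm t h, Pi.zero_apply, mul_zero]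
      refine (Finset.sum_eq_zero fun s hs => ?_).symm
      rw [← hZP s, (Finset.mem_filter.1 hs).2, hm t h]
      simp
  · intro t ht
    by_cases ht0 : t.1 0 = 0
    · rcases le_or_gt (deg t) m with h | h
      · have : ∀ K, q (Function.update t.1 0 K, t.2) = 0 := fun K =>
          hT _ (fun hmem => ht (Finset.mem_image.2 ⟨_, hmem, hZup t ht0 K⟩)) h
        simp [chiData, ht0, this, (linOn_DPow _).zero]
      · simp [hm t h, (linOn_DPow _).zero]
    · simp [chiData, ht0]

/-- If `A ∈ LDO(n)` has `χ(A) = 0`, then `χ(A ∘ d/dx^i_j) = 0` for all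
`1 ≤ i ≤ N`, `1 ≤ j ≤ n`; i.e. the sequence `{χ = 0} → LDO(n) → LDO(n)^{⊕Nn}` is a
chain complex. -/
theorem chi_precomp_of_chi_zero {N n : ℕ} [NeZero n] (q : OpData N n) (hq : Good q)
    (h : ∀ f, LocalTuple f → ∀ pt, realizeP (chiData q) f pt = 0)
    (i : Fin N) (j : Fin n) :
    ChiZero (precompD (realizeP q) i j) := by
  classical
  choose c hdeg hT hχ using exists_coeff (N := N) (n := n) i j
  set S : ℕ → Finset (Idx N n) := fun m => (hq.2 m).toFinset with hS
  have memS : ∀ m s, s ∈ S m ↔ q s ≠ 0 ∧ deg s ≤ m := fun m s => by simp [hS, deg]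
  have hSz : ∀ m s, s ∉ S m → deg s ≤ m → q s = 0 := fun m s hs hd => by
    by_contra hne
    exact hs ((memS m s).2 ⟨hne, hd⟩)
  -- only indices `s` with `deg s ≤ deg t + 1` contribute to the coefficient at `t`
  set q' : OpData N n := fun t => ∑ s ∈ S (deg t + 1), c s t • q s with hq'
  have q'_eq : ∀ m t, deg t ≤ m → q' t = ∑ s ∈ S (m + 1), c s t • q s := by
    intro m t ht
    refine Finset.sum_subset (fun s hs => ?_) fun s hs hs' => ?_
    · have := (memS _ s).1 hs
      exact (memS _ s).2 ⟨this.1, by omega⟩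
    · have hct : c s t = 0 := by
        by_contra hne
        exact hs' ((memS _ s).2 ⟨((memS _ s).1 hs).1,
          hdeg s t (Finsupp.mem_support_iff.2 hne)⟩)
      rw [hct, zero_smul]
  set T : ℕ → Finset (Idx N n) := fun m => (S (m + 1)).biUnion fun s => (c s).support with hTdef
  have hTsub : ∀ m s, s ∈ S (m + 1) → (c s).support ⊆ T m := fun m s hs =>
    Finset.subset_biUnion_of_mem (fun s => (c s).support) hs
  have hTz : ∀ m t, t ∉ T m → deg t ≤ m → q' t = 0 := by
    intro m t ht hd
    rw [q'_eq m t hd]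
    refine Finset.sum_eq_zero fun s hs => ?_
    have : c s t = 0 := by
      by_contra hne
      exact ht (hTsub m s hs (Finsupp.mem_support_iff.2 hne))
    rw [this, zero_smul]
  have lc : ∀ m s, s ∈ S (m + 1) → ∀ v : Idx N n → Fn N,
      Finsupp.linearCombination ℝ v (c s) = ∑ t ∈ T m, c s t • v t := by
    intro m s hs v
    rw [Finsupp.linearCombination_apply]
    exact Finsupp.sum_of_support_subset _ (hTsub m s hs) _ (by simp)
  have bound : ∀ f, LocalTuple f → ∃ m : ℕ, (∀ s : Idx N n, m < deg s → opP s f = 0) ∧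
      ∀ s : Idx N n, m + 1 < deg s → opP s (Function.update f j (Dtot i (f j))) = 0 := by
    intro f hf
    obtain ⟨m₁, h₁⟩ := exists_opP_eq_zero hf
    obtain ⟨m₂, h₂⟩ := exists_opP_eq_zero (localTuple_update hf i j)
    exact ⟨max m₁ m₂, fun s hs => h₁ s (by omega), fun s hs => h₂ s (by omega)⟩
  refine ⟨q', ⟨fun t => IsLocal.sum fun s _ => (hq.1 s).smul _, fun m => ?_⟩, ?_, ?_⟩
  · refine (T m).finite_toSet.subset fun t ht => ?_
    by_contra hne
    exact ht.1 (hTz m t hne ht.2)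
  · intro f hf pt
    obtain ⟨m, hm, hm'⟩ := bound f hf
    suffices H : realizeP q (Function.update f j (Dtot i (f j))) = realizeP q' f from
      congrFun H pt
    rw [realizeP_eq_sum hm (hTz m), realizeP_eq_sum hm' (hSz (m + 1))]
    have e1 : ∀ s ∈ S (m + 1), q s * DPow (s.1 0) (opP s (Function.update f j (Dtot i (f j))))
        = ∑ t ∈ T m, c s t • q s * DPow (t.1 0) (opP t f) := by
      intro s hs
      rw [hT s f hf, lc m s hs, Finset.mul_sum]
      exact Finset.sum_congr rfl fun t _ => by rw [mul_smul_comm, smul_mul_assoc]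
    rw [Finset.sum_congr rfl e1, Finset.sum_comm]
    refine Finset.sum_congr rfl fun t _ => ?_
    rcases le_or_gt (deg t) m with hd | hd
    · rw [q'_eq m t hd, Finset.sum_mul]
    · simp [hm t hd, (linOn_DPow _).zero]
  · intro f hf pt
    obtain ⟨m, hm, hm'⟩ := bound f hf
    have hm1 : ∀ s : Idx N n, m + 1 < deg s → opP s f = 0 := fun s hs => hm s (by omega)
    have loc : ∀ s, IsLocal (sgn (s.1 0) • (DPow (s.1 0) (q s) * opP s f)) := fun s =>
      (((linOn_DPow _).loc _ (hq.1 s)).mul (isLocal_opP s hf)).smul _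
    have z1 : realizeP (chiData q) (Function.update f j (Dtot i (f j))) = 0 :=
      funext (h _ (localTuple_update hf i j))
    have z2 : realizeP (chiData q) f = 0 := funext (h f hf)
    rw [realizeP_chiData_eq_sum hm' (hSz (m + 1))] at z1
    rw [realizeP_chiData_eq_sum hm1 (hSz (m + 1))] at z2
    suffices H : realizeP (chiData q') f = 0 from congrFun H pt
    rw [realizeP_chiData_eq_sum hm (hTz m)]
    have e1 : ∀ t ∈ T m, sgn (t.1 0) • (DPow (t.1 0) (q' t) * opP t f)
        = ∑ s ∈ S (m + 1), c s t • sgn (t.1 0) • (DPow (t.1 0) (q s) * opP t f) := by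
      intro t _
      rcases le_or_gt (deg t) m with hd | hd
      · rw [q'_eq m t hd, (linOn_DPow _).sum fun s _ => (hq.1 s).smul _, Finset.sum_mul,
          Finset.smul_sum]
        refine Finset.sum_congr rfl fun s _ => ?_
        rw [(linOn_DPow _).smul _ _ (hq.1 s), smul_mul_assoc, smul_comm]
      · simp [hm t hd]
    rw [Finset.sum_congr rfl e1, Finset.sum_comm]
    have e2 : ∀ s ∈ S (m + 1),
        ∑ t ∈ T m, c s t • sgn (t.1 0) • (DPow (t.1 0) (q s) * opP t f) =
          sgn (s.1 0) • (DPow (s.1 0) (q s) * opP s (Function.update f j (Dtot i (f j)))) -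
            if j = 0 then Dtot i (sgn (s.1 0) • (DPow (s.1 0) (q s) * opP s f)) else 0 := by
      intro s hs
      rw [← hχ s (q s) (hq.1 s) f hf, lc m s hs]
    rw [Finset.sum_congr rfl e2, Finset.sum_sub_distrib, z1, zero_sub, neg_eq_zero]
    by_cases hj : j = 0
    · simp only [if_pos hj]
      rw [← (linOn_Dtot i).sum fun s _ => loc s, z2, (linOn_Dtot i).zero]
    · simp [hj]

end JetBundle
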